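/- arXiv:hep-th/9710202 — 2 statements merged into one kernel-verified Lean document; each statement's English description precedes it below -/
import Mathlib

section
/- Let n ≥ 1 and m ≥ 1, and let Y_1, …, Y_m be n×n complex matrices, each symmetric (Y_αᵀ = Y_α), satisfying the Clifford-type Yukawa relations Y_α* Y_β + Y_β* Y_α = 2 δ_{αβ} I_n for all α, β ∈ {1,…,m} (where * denotes conjugate transpose). Then there exists a unitary n×n complex matrix U such that Uᵀ Y_1 U = I_n, and for every β ∈ {2,…,m} there exists a real symmetric n×n matrix N_β with Uᵀ Y_β U = i · N_β, N_β² = I_n, and N_β N_γ = − N_γ N_β for all β ≠ γ in {2,…,m}. (A family of Yukawa couplings satisfying the diagonal anticommutation relations is equivalent, under the U(n) symmetry of the Yukawa finiteness condition, to the union of the identity matrix and a set of real, symmetric, pairwise anticommuting generators of a Clifford algebra.) -/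
open Matrix Complex

open scoped Matrix.Norms.L2Operator in
/-- A symmetric unitary matrix has a symmetric unitary inverse square root. -/
theorem takagi_unitary {n : ℕ} (Y : Matrix (Fin n) (Fin n) ℂ) (hs : Yᵀ = Y)
    (hu : Yᴴ * Y = 1) :
    ∃ U : Matrix (Fin n) (Fin n) ℂ, Uᴴ * U = 1 ∧ Uᵀ * Y * U = 1 := by
  have hu' : Y * Yᴴ = 1 := mul_eq_one_comm.mp hu
  have hmem : Y ∈ unitary (Matrix (Fin n) (Fin n) ℂ) := ⟨hu, hu'⟩
  have hn : IsStarNormal Y := ⟨by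
    change Yᴴ * Y = Y * Yᴴ
    rw [hu, hu']⟩
  have hfin : (spectrum ℂ Y).Finite := Matrix.finite_spectrum Y
  have hsq : ∀ z : ℂ, ∃ w : ℂ, w ^ 2 = z⁻¹ := fun z =>
    IsAlgClosed.exists_pow_nat_eq z⁻¹ (by norm_num)
  choose g hg using hsq
  let q : Polynomial ℂ := Lagrange.interpolate hfin.toFinset id g
  have hq : ∀ z ∈ spectrum ℂ Y, q.eval z = g z := fun z hz =>
    Lagrange.eval_interpolate_at_node g (Function.injective_id.injOn)
      (hfin.mem_toFinset.mpr hz)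
  have hnorm : ∀ z ∈ spectrum ℂ Y, ‖z‖ = 1 := fun z hz => by
    simpa using spectrum.subset_circle_of_unitary hmem hz
  have hW : Polynomial.aeval Y q = cfc (fun z => q.eval z) Y := (cfc_polynomial q Y).symm
  have hWs : (Polynomial.aeval Y q)ᵀ = Polynomial.aeval Y q := by
    rw [Polynomial.aeval_eq_sum_range, Matrix.transpose_sum]
    simp [Matrix.transpose_smul, Matrix.transpose_pow, hs]
  refine ⟨Polynomial.aeval Y q, ?_, ?_⟩
  · rw [← Matrix.star_eq_conjTranspose, hW, ← cfc_star, ← cfc_mul _ _ Y, ← cfc_one ℂ Y]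
    apply cfc_congr
    intro z hz
    have h1 : ‖g z‖ ^ 2 = 1 := by rw [← norm_pow, hg, norm_inv, hnorm z hz, inv_one]
    simp only [hq z hz, Pi.one_apply]
    change (starRingEnd ℂ) (g z) * g z = 1
    rw [Complex.conj_mul', ← Complex.ofReal_pow, h1, Complex.ofReal_one]
  · rw [hWs, hW]
    have h2 : cfc (fun z => q.eval z) Y * Y = cfc (fun z => q.eval z * z) Y := by
      rw [cfc_mul _ _ Y, cfc_id' ℂ Y]
    rw [h2, ← cfc_mul _ _ Y, ← cfc_one ℂ Y]
    apply cfc_congr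
    intro z hz
    have hz0 : z ≠ 0 := by
      intro h
      have := hnorm z hz
      simp [h] at this
    simp only [hq z hz, Pi.one_apply]
    calc g z * z * g z = g z ^ 2 * z := by ring
      _ = 1 := by rw [hg, inv_mul_cancel₀ hz0]

/-- Clifford-type Yukawa couplings are equivalent, under a unitary change of
basis, to the union of the identity matrix and a set of real, symmetric,
pairwise anticommuting Clifford generators. -/
theorem stmt_0 (n m : ℕ) (hn : 1 ≤ n) (hm : 1 ≤ m)
    (Y : Fin m → Matrix (Fin n) (Fin n) ℂ)
    (hsym : ∀ α, (Y α)ᵀ = Y α)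
    (hcliff : ∀ α β, (Y α)ᴴ * Y β + (Y β)ᴴ * Y α =
      if α = β then (2 : ℂ) • (1 : Matrix (Fin n) (Fin n) ℂ) else 0) :
    ∃ (U : Matrix (Fin n) (Fin n) ℂ) (N : Fin m → Matrix (Fin n) (Fin n) ℝ),
      Uᴴ * U = 1 ∧
      Uᵀ * Y ⟨0, hm⟩ * U = 1 ∧
      (∀ β, β ≠ ⟨0, hm⟩ →
        (N β)ᵀ = N β ∧
        Uᵀ * Y β * U = Complex.I • (N β).map (Complex.ofReal) ∧
        N β * N β = 1) ∧
      (∀ β γ, β ≠ ⟨0, hm⟩ → γ ≠ ⟨0, hm⟩ → β ≠ γ →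
        N β * N γ = - (N γ * N β)) := by
  have hY : ∀ α, (Y α)ᴴ * Y α = 1 := fun α => by
    have h := hcliff α α
    rw [if_pos rfl, ← two_smul ℂ] at h
    exact smul_right_injective _ (two_ne_zero (α := ℂ)) h
  obtain ⟨U, hU, hU0⟩ := takagi_unitary (Y ⟨0, hm⟩) (hsym _) (hY _)
  have hT : Uᵀᴴ * Uᵀ = 1 := by
    have h1 : U * Uᴴ = 1 := mul_eq_one_comm.mp hU
    have h2 := congrArg Matrix.transpose h1
    rwa [Matrix.transpose_mul, Matrix.transpose_one] at h2
  obtain ⟨Z, hZ⟩ : ∃ Z : Fin m → Matrix (Fin n) (Fin n) ℂ, ∀ α, Z α = Uᵀ * Y α * U :=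
    ⟨_, fun _ => rfl⟩
  have hT' : U.transpose * (U.transpose)ᴴ = 1 := mul_eq_one_comm.mp hT
  have hprod : ∀ α β, (Z α)ᴴ * Z β = Uᴴ * ((Y α)ᴴ * Y β) * U := fun α β => by
    rw [hZ, hZ, Matrix.conjTranspose_mul, Matrix.conjTranspose_mul]
    calc Uᴴ * ((Y α)ᴴ * Uᵀᴴ) * (Uᵀ * Y β * U)
        = Uᴴ * (Y α)ᴴ * (Uᵀᴴ * Uᵀ) * Y β * U := by simp only [Matrix.mul_assoc]
      _ = _ := by rw [hT]; simp only [Matrix.mul_assoc, Matrix.one_mul]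
  have hZ1 : ∀ α, (Z α)ᴴ * Z α = 1 := fun α => by
    rw [hprod, hY, Matrix.mul_one, hU]
  have hZ2 : ∀ α β, α ≠ β → (Z α)ᴴ * Z β + (Z β)ᴴ * Z α = 0 := fun α β h => by
    rw [hprod, hprod, ← Matrix.add_mul, ← Matrix.mul_add, hcliff, if_neg h]
    simp
  have hZs : ∀ α, (Z α)ᵀ = Z α := fun α => by
    rw [hZ, Matrix.transpose_mul, Matrix.transpose_mul, hsym, Matrix.transpose_transpose,
      Matrix.mul_assoc]
  have hZ0 : Z ⟨0, hm⟩ = 1 := by rw [hZ, hU0]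
  have hanti : ∀ β, β ≠ ⟨0, hm⟩ → (Z β)ᴴ = - Z β := fun β h => by
    have := hZ2 β _ h
    rw [hZ0, Matrix.mul_one, Matrix.conjTranspose_one, Matrix.one_mul] at this
    exact eq_neg_of_add_eq_zero_left this
  let N : Fin m → Matrix (Fin n) (Fin n) ℝ := fun β => (Z β).map Complex.im
  have hN : ∀ β, β ≠ ⟨0, hm⟩ → Z β = Complex.I • (N β).map Complex.ofReal := fun β h => by
    ext i j
    have h1 := congrFun (congrFun (hanti β h) j) i
    have h2 := congrFun (congrFun (hZs β) i) j
    simp only [Matrix.conjTranspose_apply, Matrix.neg_apply, Matrix.transpose_apply] at h1 h2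
    rw [h2] at h1
    have h3 := congrArg Complex.re h1
    simp at h3
    apply Complex.ext
    · simp [N]; linarith
    · simp [N]
  have hinj : Function.Injective
      (fun A : Matrix (Fin n) (Fin n) ℝ => A.map Complex.ofReal) :=
    Matrix.map_injective Complex.ofReal_injective
  have hmul : ∀ β γ, β ≠ ⟨0, hm⟩ → γ ≠ ⟨0, hm⟩ →
      (N β * N γ).map Complex.ofReal = (Z β)ᴴ * Z γ := fun β γ hb hc => by
    rw [hanti β hb, hN β hb, hN γ hc]
    have : (N β * N γ).map Complex.ofReal
        = (N β).map Complex.ofReal * (N γ).map Complex.ofReal :=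
      Matrix.map_mul (f := Complex.ofRealHom)
    rw [this, Matrix.neg_mul, Matrix.smul_mul, Matrix.mul_smul, smul_smul, Complex.I_mul_I]
    simp
  refine ⟨U, N, hU, hU0, fun β h => ⟨?_, ?_, ?_⟩, fun β γ hb hc hbc => ?_⟩
  · change ((Z β).map Complex.im)ᵀ = _
    rw [← Matrix.transpose_map, hZs]
  · rw [← hZ, hN β h]
  · apply hinj
    change (N β * N β).map Complex.ofReal = (1 : Matrix (Fin n) (Fin n) ℝ).map Complex.ofReal
    rw [hmul β β h h, hZ1, Matrix.map_one _ Complex.ofReal_zero Complex.ofReal_one]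
  · apply hinj
    change (N β * N γ).map Complex.ofReal = (-(N γ * N β)).map Complex.ofReal
    have : (-(N γ * N β)).map Complex.ofReal = -((N γ * N β).map Complex.ofReal) := by
      ext i j; simp
    rw [this, hmul β γ hb hc, hmul γ β hc hb]
    exact eq_neg_of_add_eq_zero_left (hZ2 β γ hbc)
end

section
/- Let n ≥ 1, m ≥ 1, let Y_1, …, Y_m be n×n complex matrices, each symmetric (Y_αᵀ = Y_α), and suppose there are real numbers u_α (α ∈ {1,…,m}) and v_i (i ∈ {1,…,n}) such that Y_α* Y_β + Y_β* Y_α = 2 δ_{αβ} X_α for all α, β, where X_α is the diagonal matrix with i-th diagonal entry u_α · v_i (tensorial form). Define y_F^i := Σ_{β=1}^m (X_β)_{ii} = (Σ_β u_β) v_i. Then for every α and all indices i, j: (Y_α)_{ij} · (y_F^i − y_F^j) = 0. -/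
open Matrix
open scoped BigOperators

/-- For symmetric Yukawa couplings with diagonalized tensorial
`Yαᴴ Yβ + Yβᴴ Yα = 2 δ_{αβ} Xα`, `(Xα)_{ii} = u_α v_i`, the Yukawa couplings
connect only fermions with equal trace eigenvalues `y_F^i = (Σ_β u_β) v_i`:
`(Yα)_{ij} (y_F^i − y_F^j) = 0`. -/
theorem stmt_15 (n m : ℕ) (hn : 1 ≤ n) (hm : 1 ≤ m)
    (Y : Fin m → Matrix (Fin n) (Fin n) ℂ)
    (u : Fin m → ℝ) (v : Fin n → ℝ)
    (hsym : ∀ α, (Y α)ᵀ = Y α)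
    (hdiag : ∀ α β, (Y α)ᴴ * Y β + (Y β)ᴴ * Y α =
      if α = β then (2 : ℂ) • Matrix.diagonal (fun i => ((u α * v i : ℝ) : ℂ))
      else 0) :
    ∀ α, ∀ i j,
      Y α i j * ((((∑ β, u β) * v i : ℝ) : ℂ) - (((∑ β, u β) * v j : ℝ) : ℂ))
        = 0 := by
  intro α i j
  have h1 : (Y α)ᴴ * Y α = Matrix.diagonal (fun i => ((u α * v i : ℝ) : ℂ)) := by
    have h := hdiag α α
    rw [if_pos rfl, ← two_smul ℂ] at h
    exact smul_right_injective _ (two_ne_zero : (2 : ℂ) ≠ 0) h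
  -- symmetry of `Y α` turns `Yᴴ Y = X` into `Y Yᴴ = X`
  have h2 : Y α * (Y α)ᴴ = Matrix.diagonal (fun i => ((u α * v i : ℝ) : ℂ)) := by
    have h := congrArg Matrix.transpose h1
    have hc : ((Y α)ᴴ)ᵀ = (Y α)ᴴ := by
      conv_rhs => rw [← hsym α]
      rfl
    rw [Matrix.transpose_mul, hsym, hc, Matrix.diagonal_transpose] at h
    exact h
  have h3 : Y α * Matrix.diagonal (fun i => ((u α * v i : ℝ) : ℂ))
      = Matrix.diagonal (fun i => ((u α * v i : ℝ) : ℂ)) * Y α := by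
    conv_lhs => rw [← h1]
    rw [← h2, Matrix.mul_assoc]
  have h4 := congrFun (congrFun h3 i) j
  rw [Matrix.mul_diagonal, Matrix.diagonal_mul] at h4
  by_cases hu : u α = 0
  · have h5 : (Y α)ᴴ * Y α = 0 := by
      rw [h1]; simp [hu]
    open scoped ComplexOrder in rw [Matrix.conjTranspose_mul_self_eq_zero] at h5
    simp [h5]
  · have hu' : (u α : ℂ) ≠ 0 := by exact_mod_cast hu
    apply mul_left_cancel₀ hu'
    push_cast at h4 ⊢
    linear_combination (-(∑ β, (u β : ℂ))) * h4
end
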